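/- Let z, z', z'' ∈ (ℝ²)⁵ with zᵢ ≠ 0 for all i, and suppose there exist nonzero real scalars αᵢ, βᵢ (i = 1,…,5) such that z'ᵢ = αᵢzᵢ and z''ᵢ = βᵢzᵢ. Then there exists a nonzero vector w ∈ ℝ¹⁰ such that both wᵀ(A_e^{(2)}·D(z')ᵀ·D(z)) = 0 and wᵀ(A_e^{(2)}·D(z'')ᵀ) = 0. (In the formation-control interpretation: for edge lengths in 𝒮₀ there is a nonzero covector annihilating both the Jacobian ∂F/∂z at the design equilibrium and the parameter Jacobian ∂F/∂d.) -/

import Mathlib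

open Matrix

/-- The edge-adjacency matrix of the 2-cycles. -/
def Ae : Matrix (Fin 5) (Fin 5) ℝ :=
  !![-1, 1, 0, 0, -1;
      0, -1, 1, 0, 0;
      1, 0, -1, 0, 1;
      0, 0, 1, -1, 0;
     -1, 0, 0, 1, -1]

/-- `A_e^{(2)} = A_e ⊗ I₂`, the Kronecker product with the 2×2 identity. -/
noncomputable def Ae2 : Matrix (Fin 5 × Fin 2) (Fin 5 × Fin 2) ℝ :=
  Matrix.kroneckerMap (· * ·) Ae (1 : Matrix (Fin 2) (Fin 2) ℝ)

/-- `D(z)`: the 5×10 block-diagonal matrix whose `i`-th diagonal block is the row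
vector `zᵢᵀ`. -/
def Dmat (z : Fin 5 → Fin 2 → ℝ) : Matrix (Fin 5) (Fin 5 × Fin 2) ℝ :=
  Matrix.of fun i p => if p.1 = i then z i p.2 else 0

/-!
Scaling the blocks of `D(z)` by `γ` multiplies it on the left by the diagonal matrix of `γ`, so
both matrices have the form `(A · D(z)ᵀ) · C`. The common left factor `A · D(z)ᵀ` is `10 × 5`, so
it has a nonzero left null vector `w`, which then annihilates both products; this `w` depends
on neither `α` nor `β`.
-/

theorem exists_vecMul_eq_zero_of_card_lt {m n R : Type*} [Fintype m] [Fintype n] [Ring R]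
    [StrongRankCondition R] (M : Matrix m n R) (hcard : Fintype.card n < Fintype.card m) :
    ∃ w ≠ 0, w ᵥ* M = 0 := by
  by_contra! hM
  have hinj : Function.Injective M.vecMulLinear :=
    (injective_iff_map_eq_zero _).2 fun w hw => not_imp_not.1 (hM w) hw
  exact hcard.not_ge (card_le_of_injective R M.vecMulLinear hinj)

section RowBlockDiagonal

variable {ι κ R : Type*} [DecidableEq ι]

/-- The block-diagonal matrix with the rows `zᵢᵀ` as diagonal blocks, that is `D(z)` for vectors of
any size over any coefficients. The column `(i, k)` is the `k`-th column of the `i`-th block. -/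
def rowBlockDiagonal [Zero R] (z : ι → κ → R) : Matrix ι (ι × κ) R :=
  Matrix.of fun i p => if p.1 = i then z i p.2 else 0

theorem Dmat_eq_rowBlockDiagonal (z : Fin 5 → Fin 2 → ℝ) : Dmat z = rowBlockDiagonal z :=
  rfl

theorem rowBlockDiagonal_smul [Fintype ι] [NonUnitalNonAssocSemiring R] (γ : ι → R)
    (z : ι → κ → R) : rowBlockDiagonal (γ • z) = diagonal γ * rowBlockDiagonal z := by
  ext i p
  simp [rowBlockDiagonal, diagonal_mul]

theorem mul_transpose_rowBlockDiagonal_smul [Fintype ι] [Fintype κ] [CommSemiring R] {m : Type*}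
    (A : Matrix m (ι × κ) R) (γ : ι → R) (z : ι → κ → R) :
    A * (rowBlockDiagonal (γ • z))ᵀ = A * (rowBlockDiagonal z)ᵀ * diagonal γ := by
  rw [rowBlockDiagonal_smul, transpose_mul, diagonal_transpose, Matrix.mul_assoc]

theorem exists_common_left_annihilator_general [Fintype ι] [Fintype κ] [CommRing R] [Nontrivial R]
    {m : Type*} [Fintype m] (A : Matrix m (ι × κ) R) (z : ι → κ → R)
    (hcard : Fintype.card ι < Fintype.card m) :
    ∃ w : m → R, w ≠ 0 ∧ ∀ α β : ι → R,
      w ᵥ* (A * (rowBlockDiagonal (α • z))ᵀ * rowBlockDiagonal z) = 0 ∧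
      w ᵥ* (A * (rowBlockDiagonal (β • z))ᵀ) = 0 := by
  obtain ⟨w, hw, hwA⟩ := exists_vecMul_eq_zero_of_card_lt (A * (rowBlockDiagonal z)ᵀ) hcard
  have hscaled (γ : ι → R) : w ᵥ* (A * (rowBlockDiagonal (γ • z))ᵀ) = 0 := by
    rw [mul_transpose_rowBlockDiagonal_smul, ← vecMul_vecMul, hwA, zero_vecMul]
  refine ⟨w, hw, fun α β => ⟨?_, hscaled β⟩⟩
  rw [← vecMul_vecMul, hscaled α, zero_vecMul]

end RowBlockDiagonal

/-- Suppose `zᵢ ≠ 0` and `z'ᵢ = αᵢ zᵢ`, `z''ᵢ = βᵢ zᵢ` with all `αᵢ, βᵢ` nonzero.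
Then there is a nonzero covector `w ∈ ℝ¹⁰` annihilating both the Jacobian form
`A_e^{(2)}·D(z')ᵀ·D(z)` and the parameter Jacobian form `A_e^{(2)}·D(z'')ᵀ` on the
left. -/
theorem exists_common_left_annihilator (z z' z'' : Fin 5 → Fin 2 → ℝ)
    (α β : Fin 5 → ℝ) (hz : ∀ i, z i ≠ 0) (hα : ∀ i, α i ≠ 0) (hβ : ∀ i, β i ≠ 0)
    (hz' : ∀ i, z' i = α i • z i) (hz'' : ∀ i, z'' i = β i • z i) :
    ∃ w : Fin 5 × Fin 2 → ℝ, w ≠ 0 ∧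
      Matrix.vecMul w (Ae2 * (Dmat z')ᵀ * Dmat z) = 0 ∧
      Matrix.vecMul w (Ae2 * (Dmat z'')ᵀ) = 0 := by
  obtain ⟨rfl, rfl⟩ : z' = α • z ∧ z'' = β • z := ⟨funext hz', funext hz''⟩
  obtain ⟨w, hw, h⟩ := exists_common_left_annihilator_general Ae2 z (by simp)
  exact ⟨w, hw, by simpa only [Dmat_eq_rowBlockDiagonal] using h α β⟩
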